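/- The set function f is nonnegative and monotone on sets of cardinality at most k: for all subsets P₁ ⊆ P₂ of {1,…,m} with |P₂| ≤ k, 0 ≤ f(P₁) ≤ f(P₂). -/

import Mathlib

open Finset

noncomputable section

/-- Frobenius inner product `⟨S, γ⟩ = Σ_{i,j} S_{ij} γ_{ij}`. -/
def dotS {m n : ℕ} (S γ : Fin m → Fin n → ℝ) : ℝ := ∑ i, ∑ j, S i j * γ i j

/-- Transport polytope with equality marginals. -/
def Gamma {m n : ℕ} (μ : Fin m → ℝ) (ν : Fin n → ℝ) : Set (Fin m → Fin n → ℝ) :=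
  {γ | (∀ i j, 0 ≤ γ i j) ∧ (∀ i, ∑ j, γ i j = μ i) ∧ (∀ j, ∑ i, γ i j = ν j)}

/-- Semi-relaxed transport polytope: target marginal constraint is `≤`. -/
def GammaLe {m n : ℕ} (μ : Fin m → ℝ) (ν : Fin n → ℝ) : Set (Fin m → Fin n → ℝ) :=
  {γ | (∀ i j, 0 ≤ γ i j) ∧ (∀ i, ∑ j, γ i j = μ i) ∧ (∀ j, ∑ i, γ i j ≤ ν j)}

/-- Indicator vector of a subset `P ⊆ {1,…,m}`. -/
def indVec {m : ℕ} (P : Finset (Fin m)) : Fin m → ℝ := fun i => if i ∈ P then 1 else 0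

/-- `h(P) = max_{γ ∈ Γ(1_P, (|P|/n)𝟙)} ⟨S, γ⟩`. -/
def hval {m n : ℕ} (S : Fin m → Fin n → ℝ) (P : Finset (Fin m)) : ℝ :=
  sSup (dotS S '' Gamma (indVec P) (fun _ => (P.card : ℝ) / (n : ℝ)))

/-- `f(P) = max_{γ ∈ Γ_≤(1_P, (k/n)𝟙)} ⟨S, γ⟩`. -/
def fval {m n : ℕ} (k : ℕ) (S : Fin m → Fin n → ℝ) (P : Finset (Fin m)) : ℝ :=
  sSup (dotS S '' GammaLe (indVec P) (fun _ => (k : ℝ) / (n : ℝ)))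

/-! Given a plan for the smaller source marginal `μ`, its unused column capacity totals
`∑ ν - ∑ μ`, which is at least the missing mass `∑ μ' - ∑ μ`. Sending the missing mass into the
unused capacity by a product plan extends the given plan entrywise to one for `μ'`, and this
does not decrease `⟨S, ·⟩` because `S ≥ 0`. -/

section Objective

variable {m n : ℕ} {S : Fin m → Fin n → ℝ}

theorem dotS_nonneg {γ : Fin m → Fin n → ℝ} (hS : 0 ≤ S) (hγ : 0 ≤ γ) : 0 ≤ dotS S γ :=
  sum_nonneg fun i _ => sum_nonneg fun j _ => mul_nonneg (hS i j) (hγ i j)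

theorem dotS_monotone (hS : 0 ≤ S) : Monotone (dotS S) := fun _ _ h =>
  sum_le_sum fun i _ => sum_le_sum fun j _ => mul_le_mul_of_nonneg_left (h i j) (hS i j)

end Objective

section Polytope

variable {m n : ℕ} {μ μ' : Fin m → ℝ} {ν ν' : Fin n → ℝ} {γ γ' : Fin m → Fin n → ℝ}

theorem add_mem_GammaLe (hγ : γ ∈ GammaLe μ ν) (hγ' : γ' ∈ GammaLe μ' ν') :
    γ + γ' ∈ GammaLe (μ + μ') (ν + ν') := by
  obtain ⟨nonneg, row, col⟩ := hγ
  obtain ⟨nonneg', row', col'⟩ := hγ'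
  refine ⟨fun i j => add_nonneg (nonneg i j) (nonneg' i j), fun i => ?_, fun j => ?_⟩
  · simp only [Pi.add_apply, sum_add_distrib, row, row']
  · simpa only [Pi.add_apply, sum_add_distrib] using add_le_add (col j) (col' j)

theorem bddAbove_GammaLe (μ : Fin m → ℝ) (ν : Fin n → ℝ) : BddAbove (GammaLe μ ν) :=
  ⟨fun i _ => μ i, fun _ ⟨nonneg, row, _⟩ i j =>
    (single_le_sum (fun j _ => nonneg i j) (mem_univ j)).trans_eq (row i)⟩

theorem GammaLe_nonempty (hμ : 0 ≤ μ) (hν : 0 ≤ ν) (hμν : ∑ i, μ i ≤ ∑ j, ν j) :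
    (GammaLe μ ν).Nonempty := by
  have total_nonneg : 0 ≤ ∑ j, ν j := sum_nonneg fun j _ => hν j
  refine ⟨fun i j => μ i * ν j / ∑ j, ν j,
    fun i j => div_nonneg (mul_nonneg (hμ i) (hν j)) total_nonneg, fun i => ?_, fun j => ?_⟩
  · have μ_le_total : μ i ≤ ∑ j, ν j :=
      (single_le_sum (fun i _ => hμ i) (mem_univ i)).trans hμν
    have μ_eq_zero (total_eq_zero : ∑ j, ν j = 0) : μ i = 0 :=
      le_antisymm (μ_le_total.trans_eq total_eq_zero) (hμ i)
    rw [← sum_div, ← mul_sum, mul_div_cancel_of_imp μ_eq_zero]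
  · calc ∑ i, μ i * ν j / ∑ j, ν j = ν j * ((∑ i, μ i) / ∑ j, ν j) := by
          rw [← sum_div, ← sum_mul, mul_comm, mul_div_assoc]
      _ ≤ ν j := mul_le_of_le_one_right (hν j) (div_le_one_of_le₀ hμν total_nonneg)

theorem exists_mem_GammaLe_ge (hμ : μ ≤ μ') (hμν : ∑ i, μ' i ≤ ∑ j, ν j)
    (hγ : γ ∈ GammaLe μ ν) : ∃ γ' ∈ GammaLe μ' ν, γ ≤ γ' := by
  let slack : Fin n → ℝ := fun j => ν j - ∑ i, γ i j
  have slack_nonneg : 0 ≤ slack := fun j => sub_nonneg.2 (hγ.2.2 j)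
  have sum_slack : ∑ j, slack j = ∑ j, ν j - ∑ i, μ i := by
    simp only [slack, sum_sub_distrib, sum_comm (s := (univ : Finset (Fin n))), hγ.2.1]
  have deficit_le_slack : ∑ i, (μ' - μ) i ≤ ∑ j, slack j := by
    simpa only [sum_slack, Pi.sub_apply, sum_sub_distrib] using sub_le_sub_right hμν _
  obtain ⟨δ, hδ⟩ := GammaLe_nonempty (sub_nonneg.2 hμ) slack_nonneg deficit_le_slack
  have hγ_tight : γ ∈ GammaLe μ (fun j => ∑ i, γ i j) := ⟨hγ.1, hγ.2.1, fun _ => le_rfl⟩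
  refine ⟨γ + δ, ?_, le_add_of_nonneg_right hδ.1⟩
  convert add_mem_GammaLe hγ_tight hδ using 1
  have col : (fun j => ∑ i, γ i j) + slack = ν := by
    ext j
    simp only [slack, Pi.add_apply, add_sub_cancel]
  rw [add_sub_cancel, col]

end Polytope

section Value

variable {m n : ℕ} {S : Fin m → Fin n → ℝ} {μ μ' : Fin m → ℝ} {ν : Fin n → ℝ}

/-- The optimal value of the semi-relaxed transport problem with reward `S`, source marginal `μ`
and target capacities `ν`, as a supremum; `f(P)` is its value at `μ = 1_P` and `ν = (k/n)𝟙`. It is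
`0` when no plan is feasible. -/
def transportValue (S : Fin m → Fin n → ℝ) (μ : Fin m → ℝ) (ν : Fin n → ℝ) : ℝ :=
  sSup (dotS S '' GammaLe μ ν)

theorem transportValue_nonneg (hS : 0 ≤ S) (μ : Fin m → ℝ) (ν : Fin n → ℝ) :
    0 ≤ transportValue S μ ν :=
  Real.sSup_nonneg (Set.forall_mem_image.2 fun _ hγ => dotS_nonneg hS hγ.1)

theorem dotS_le_transportValue {γ : Fin m → Fin n → ℝ} (hS : 0 ≤ S) (hγ : γ ∈ GammaLe μ ν) :
    dotS S γ ≤ transportValue S μ ν :=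
  le_csSup ((dotS_monotone hS).map_bddAbove (bddAbove_GammaLe μ ν)) (Set.mem_image_of_mem _ hγ)

theorem transportValue_mono (hS : 0 ≤ S) (hμ : 0 ≤ μ) (hν : 0 ≤ ν) (hμμ' : μ ≤ μ')
    (hμν : ∑ i, μ' i ≤ ∑ j, ν j) : transportValue S μ ν ≤ transportValue S μ' ν := by
  have feasible : (GammaLe μ ν).Nonempty :=
    GammaLe_nonempty hμ hν ((sum_le_sum fun i _ => hμμ' i).trans hμν)
  refine csSup_le (feasible.image _) (Set.forall_mem_image.2 fun γ hγ => ?_)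
  obtain ⟨γ', hγ', hle⟩ := exists_mem_GammaLe_ge hμμ' hμν hγ
  exact (dotS_monotone hS hle).trans (dotS_le_transportValue hS hγ')

end Value

section Marginals

variable {m : ℕ}

theorem indVec_nonneg (P : Finset (Fin m)) : 0 ≤ indVec P := fun i => by
  unfold indVec
  positivity

theorem indVec_mono {P Q : Finset (Fin m)} (h : P ⊆ Q) : indVec P ≤ indVec Q := fun i => by
  unfold indVec
  split_ifs with hP hQ <;> first | exact (hQ (h hP)).elim | norm_num

theorem sum_indVec (P : Finset (Fin m)) : ∑ i, indVec P i = P.card := by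
  simp [indVec]

theorem sum_const_div {K : Type*} [Field K] [CharZero K] {n : ℕ} (hn : n ≠ 0) (c : K) :
    ∑ _j : Fin n, c / n = c := by
  rw [Fin.sum_const, nsmul_eq_mul, mul_div_cancel₀ c (Nat.cast_ne_zero.2 hn)]

end Marginals

theorem stmt_7_general {m n : ℕ} {S : Fin m → Fin n → ℝ} {μ μ' : Fin m → ℝ} {ν : Fin n → ℝ}
    (hS : 0 ≤ S) (hμ : 0 ≤ μ) (hν : 0 ≤ ν) (hμμ' : μ ≤ μ') (hμν : ∑ i, μ' i ≤ ∑ j, ν j) :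
    0 ≤ transportValue S μ ν ∧ transportValue S μ ν ≤ transportValue S μ' ν :=
  ⟨transportValue_nonneg hS μ ν, transportValue_mono hS hμ hν hμμ' hμν⟩

/-- `f` is nonnegative and monotone on sets of cardinality at most `k`. -/
theorem stmt_7 (m n k : ℕ) (hm : 0 < m) (hn : 0 < n) (hk : 0 < k)
    (hkm : k ≤ m) (hkn : k ≤ n)
    (S : Fin m → Fin n → ℝ) (hS : ∀ i j, 0 ≤ S i j)
    (P₁ P₂ : Finset (Fin m)) (hsub : P₁ ⊆ P₂) (hcard : P₂.card ≤ k) :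
    0 ≤ fval k S P₁ ∧ fval k S P₁ ≤ fval k S P₂ := by
  refine stmt_7_general hS (indVec_nonneg P₁) (fun _ => by positivity) (indVec_mono hsub) ?_
  simpa only [sum_indVec, sum_const_div hn.ne', Nat.cast_le] using hcard
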